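/- Let A be an n×n complex matrix (n ≥ 1) all of whose leading principal minors are nonzero. Then there exists an n×n complex diagonal matrix D such that all eigenvalues of D·A are real, positive and simple. -/

import Mathlib

open Matrix Polynomial

/-!
Prescribe eigenvalues `μ` that decrease fast and look for `D = diagonal (fun i => μ i * x i)`. In
`μ j • 1 - D * A`, divide row `i` by `μ (min i j)`: the result depends on `μ` only through the
ratios `μ b / μ a` with `a < b`. When all these ratios vanish its determinant is, up to sign,
`(∏ i < j, x i) * (Δ(< j) - x j * Δ(≤ j))`, where `Δ` denotes the leading principal minors of `A`.
The limiting system has the nondegenerate solution `x j = Δ(< j) / Δ(≤ j)`, so by the implicit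
function theorem the system can still be solved for small ratios, and then every `μ j` is an
eigenvalue of `D * A`.
-/

open Filter Topology Finset

section PrincipalMinor

variable {ι R : Type*} [CommRing R]

/-- The principal minor of `A` on the rows and columns in `s`. The leading ones are those with
`s = Iic j` or `s = Iio j`. -/
def principalMinor [DecidableEq ι] (A : Matrix ι ι R) (s : Finset ι) : R :=
  (A.submatrix ((↑) : s → ι) (↑)).det

lemma principalMinor_Iio_ne_zero [Nontrivial R] [LinearOrder ι] [LocallyFiniteOrderBot ι]
    {A : Matrix ι ι R} (hA : ∀ j, principalMinor A (Iic j) ≠ 0) (j : ι) :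
    principalMinor A (Iio j) ≠ 0 := by
  rcases (Iio j).eq_empty_or_nonempty with hempty | hne
  · rw [hempty, principalMinor, det_isEmpty]
    exact one_ne_zero
  · have hIio : Iio j = Iic ((Iio j).max' hne) := by
      ext i
      rw [mem_Iic]
      exact ⟨le_max' _ i, fun h => mem_Iio.2 (h.trans_lt (mem_Iio.1 (max'_mem _ hne)))⟩
    rw [hIio]
    exact hA _

lemma principalMinor_Iic_eq_det_submatrix_castLE {n : ℕ} (A : Matrix (Fin n) (Fin n) R)
    (k : Fin n) :
    principalMinor A (Iic k) =
      (A.submatrix (Fin.castLE k.isLt) (Fin.castLE k.isLt)).det := by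
  let e : Fin (k + 1) ≃ Iic k :=
    (Fin.castLEOrderIso k.isLt).toEquiv.trans
      (Equiv.subtypeEquivRight fun i => by rw [mem_Iic, Fin.le_def, Nat.lt_succ_iff])
  exact (det_submatrix_equiv_self e _).symm

end PrincipalMinor

section Algebra

variable {ι R : Type*} [Fintype ι]

lemma charpoly_eq_prod_X_sub_C [DecidableEq ι] [CommRing R] [IsDomain R] {M : Matrix ι ι R}
    {μ : ι → R} (hμ : Function.Injective μ) (hM : ∀ j, (scalar ι (μ j) - M).det = 0) :
    M.charpoly = ∏ j, (X - C (μ j)) := by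
  have hdeg : (∏ j, (X - C (μ j)) : R[X]).degree = Fintype.card ι := by simp [degree_prod]
  refine Polynomial.eq_of_degree_le_of_eval_index_eq univ hμ.injOn
    M.charpoly_degree_eq_dim.le (M.charpoly_degree_eq_dim.trans hdeg.symm) ?_ fun j _ => ?_
  · rw [M.charpoly_monic.leadingCoeff, (monic_prod_X_sub_C μ univ).leadingCoeff]
  · rw [eval_charpoly, hM j, eval_prod, prod_eq_zero (mem_univ j) (by simp)]

variable [LinearOrder ι] [CommRing R]

/-- The matrix `μ j • 1 - diagonal (fun i => μ i * x i) * A` with row `i` divided by `μ (min i j)`,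
written in terms of the ratios `r a b = μ b / μ a` for `a < b`; the other entries of `r` are
ignored. Making the ratios independent variables allows setting all of them to `0`. -/
def scaledPencil (A : Matrix ι ι R) (r : ι → ι → R) (x : ι → R) (j : ι) : Matrix ι ι R :=
  diagonal (fun i => if i < j then r i j else 1) -
    diagonal (fun i => if j < i then r j i * x i else x i) * A

lemma diagonal_mul_scaledPencil (A : Matrix ι ι R) {μ : ι → R} {r : ι → ι → R}
    (hr : ∀ a b, a < b → μ a * r a b = μ b) (x : ι → R) (j : ι) :
    diagonal (fun i => μ (min i j)) * scaledPencil A r x j =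
      scalar ι (μ j) - diagonal (fun i => μ i * x i) * A := by
  rw [scaledPencil, mul_sub, ← mul_assoc, diagonal_mul_diagonal, diagonal_mul_diagonal,
    scalar_apply]
  congr 3 <;> ext i <;> rcases lt_trichotomy i j with h | rfl | h
  all_goals simp [*, le_of_lt, not_lt_of_gt, ← mul_assoc]

variable [LocallyFiniteOrderBot ι]

lemma det_scaledPencil_zero (A : Matrix ι ι R) (x : ι → R) (j : ι) :
    (scaledPencil A 0 x j).det =
      (∏ i ∈ Iio j, -x i) *
        (principalMinor A (Iio j) - x j * principalMinor A (Iic j)) := by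
  let B : Matrix ι ι R := of ((Iio j).piecewise A.row (1 : Matrix ι ι R).row)
  have hBrow : B.updateRow j ((1 : Matrix ι ι R).row j) = B := by
    ext i l
    rcases eq_or_ne i j with rfl | hij <;> simp [B, *]
  have hArow : B.updateRow j (A.row j) =
      of ((Iic j).piecewise A.row (1 : Matrix ι ι R).row) := by
    ext i l
    simp only [updateRow_apply, of_apply, B, Finset.piecewise, mem_Iio, mem_Iic]
    grind
  have hfactor : scaledPencil A 0 x j = diagonal (fun i => if i ∈ Iio j then -x i else 1) *
      B.updateRow j ((1 : Matrix ι ι R).row j + -x j • A.row j) := by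
    ext i l
    simp only [scaledPencil, Matrix.sub_apply, diagonal_mul, diagonal_apply, updateRow_apply,
      of_apply, B, Finset.piecewise, mem_Iio, Pi.zero_apply, Pi.add_apply, Pi.smul_apply,
      smul_eq_mul, Matrix.one_apply, row_apply]
    grind [row_apply, Matrix.one_apply]
  rw [hfactor, det_mul, det_diagonal, prod_ite_mem, univ_inter, det_updateRow_add,
    det_updateRow_smul, hBrow, hArow, det_piecewise_one_eq_submatrix_det,
    det_piecewise_one_eq_submatrix_det, neg_mul, ← sub_eq_add_neg]
  rfl

end Algebra

section ImplicitFunction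

variable {𝕜 : Type*} [NontriviallyNormedField 𝕜]

lemma eventually_exists_eq_of_hasStrictFDerivAt {E₁ E₂ F : Type*}
    [NormedAddCommGroup E₁] [NormedSpace 𝕜 E₁] [CompleteSpace E₁]
    [NormedAddCommGroup E₂] [NormedSpace 𝕜 E₂] [CompleteSpace E₂]
    [NormedAddCommGroup F] [NormedSpace 𝕜 F] [CompleteSpace F]
    {f : E₁ × E₂ → F} {f' : E₁ × E₂ →L[𝕜] F} {f₂' : E₂ →L[𝕜] F} {a : E₁} {b : E₂}
    (hf : HasStrictFDerivAt f f' (a, b)) (hf₂ : HasFDerivAt (fun y => f (a, y)) f₂' b)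
    (hinv : f₂'.IsInvertible) : ∀ᶠ x in 𝓝 a, ∃ y, f (x, y) = f (a, b) := by
  have hpartial : f' ∘L .inr 𝕜 E₁ E₂ = f₂' :=
    (hf.hasFDerivAt.comp b (hasFDerivAt_prodMk_right a b)).unique hf₂
  exact (hf.eventually_apply_implicitFunctionOfProdDomain (hpartial ▸ hinv)).mono
    fun x hx => ⟨_, hx⟩

lemma isInvertible_pi_smul_proj {ι : Type*} {c : ι → 𝕜} (hc : ∀ j, c j ≠ 0) :
    (ContinuousLinearMap.pi fun j => c j • ContinuousLinearMap.proj j :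
      (ι → 𝕜) →L[𝕜] ι → 𝕜).IsInvertible :=
  ⟨.piCongrRight fun j => .smulLeft (Units.mk0 (c j) (hc j)), rfl⟩

lemma hasFDerivAt_mul_of_eq_zero {E : Type*} [NormedAddCommGroup E] [NormedSpace 𝕜 E]
    {f g : E → 𝕜} {g' : E →L[𝕜] 𝕜} {a : E} (hf : DifferentiableAt 𝕜 f a)
    (hg : HasFDerivAt g g' a) (hga : g a = 0) :
    HasFDerivAt (fun y => f y * g y) (f a • g') a := by
  refine (hf.hasFDerivAt.fun_mul hg).congr_fderiv ?_
  ext v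
  simp [hga]

variable {ι : Type*} [Fintype ι] [LinearOrder ι]

lemma analyticAt_det_scaledPencil (A : Matrix ι ι 𝕜) (j : ι) (p : (ι → ι → 𝕜) × (ι → 𝕜)) :
    AnalyticAt 𝕜 (fun p : (ι → ι → 𝕜) × (ι → 𝕜) => (scaledPencil A p.1 p.2 j).det) p := by
  have hr (a b : ι) : AnalyticAt 𝕜 (fun p : (ι → ι → 𝕜) × (ι → 𝕜) => p.1 a b) p :=
    (ContinuousLinearMap.proj b ∘L ContinuousLinearMap.proj a ∘L
      ContinuousLinearMap.fst 𝕜 (ι → ι → 𝕜) (ι → 𝕜)).analyticAt p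
  have hx (i : ι) : AnalyticAt 𝕜 (fun p : (ι → ι → 𝕜) × (ι → 𝕜) => p.2 i) p :=
    (ContinuousLinearMap.proj i ∘L ContinuousLinearMap.snd 𝕜 (ι → ι → 𝕜) (ι → 𝕜)).analyticAt p
  simp only [det_apply', scaledPencil, Matrix.sub_apply, diagonal_mul, diagonal_apply]
  refine Finset.analyticAt_fun_sum _ fun σ _ => analyticAt_const.mul <|
    Finset.analyticAt_fun_prod _ fun i _ => .sub ?_ (.mul ?_ analyticAt_const)
  · split_ifs
    exacts [hr _ _, analyticAt_const, analyticAt_const]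
  · split_ifs
    exacts [(hr _ _).mul (hx _), hx _]

variable [LocallyFiniteOrderBot ι]

lemma hasFDerivAt_det_scaledPencil_zero {A : Matrix ι ι 𝕜} {x : ι → 𝕜} {j : ι}
    (hx : principalMinor A (Iio j) - x j * principalMinor A (Iic j) = 0) :
    HasFDerivAt (fun y => (scaledPencil A 0 y j).det)
      (((∏ i ∈ Iio j, -x i) * -principalMinor A (Iic j)) •
        (ContinuousLinearMap.proj j : (ι → 𝕜) →L[𝕜] 𝕜)) x := by
  have hprod : DifferentiableAt 𝕜 (fun y : ι → 𝕜 => ∏ i ∈ Iio j, -y i) x := by fun_prop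
  have hlin : HasFDerivAt
      (fun y : ι → 𝕜 => principalMinor A (Iio j) - y j * principalMinor A (Iic j))
      (-principalMinor A (Iic j) • (ContinuousLinearMap.proj j : (ι → 𝕜) →L[𝕜] 𝕜)) x :=
    (((hasFDerivAt_apply (𝕜 := 𝕜) j x).mul_const _).const_sub _).congr_fderiv (neg_smul _ _).symm
  simp only [det_scaledPencil_zero, mul_smul]
  exact hasFDerivAt_mul_of_eq_zero hprod hlin hx

lemma eventually_exists_det_scaledPencil_eq_zero [CompleteSpace 𝕜]
    {A : Matrix ι ι 𝕜} (hA : ∀ j, principalMinor A (Iic j) ≠ 0) :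
    ∀ᶠ r : ι → ι → 𝕜 in 𝓝 0, ∃ x : ι → 𝕜, ∀ j, (scaledPencil A r x j).det = 0 := by
  let x₀ (j : ι) : 𝕜 := principalMinor A (Iio j) / principalMinor A (Iic j)
  have hx₀ (j : ι) : x₀ j ≠ 0 := div_ne_zero (principalMinor_Iio_ne_zero hA j) (hA j)
  have hroot (j : ι) : principalMinor A (Iio j) - x₀ j * principalMinor A (Iic j) = 0 :=
    sub_eq_zero.2 (div_mul_cancel₀ _ (hA j)).symm
  let F (p : (ι → ι → 𝕜) × (ι → 𝕜)) (j : ι) : 𝕜 := (scaledPencil A p.1 p.2 j).det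
  have hF : HasStrictFDerivAt F (fderiv 𝕜 F (0, x₀)) (0, x₀) :=
    (AnalyticAt.pi fun j => analyticAt_det_scaledPencil A j _).hasStrictFDerivAt
  have hF₀ : F (0, x₀) = 0 := funext fun j => by
    simp only [F, det_scaledPencil_zero, hroot, mul_zero, Pi.zero_apply]
  have hF₂ := hasFDerivAt_pi.2 fun j => hasFDerivAt_det_scaledPencil_zero (hroot j)
  have hinv := isInvertible_pi_smul_proj fun j =>
    mul_ne_zero (prod_ne_zero_iff.2 fun i (_ : i ∈ Iio j) => neg_ne_zero.2 (hx₀ i))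
      (neg_ne_zero.2 (hA j))
  have hsol := eventually_exists_eq_of_hasStrictFDerivAt hF hF₂ hinv
  rw [hF₀] at hsol
  exact hsol.mono fun r ⟨x, hx⟩ => ⟨x, congrFun hx⟩

end ImplicitFunction

lemma exists_pow_lt_mul_pow {ε : ℝ} (hε : 0 < ε) :
    ∃ t ∈ Set.Ioo (0 : ℝ) 1, ∀ i j : ℕ, i < j → t ^ j < ε * t ^ i := by
  obtain ⟨t, ht₀, ht⟩ := exists_between (lt_min hε one_pos)
  obtain ⟨htε, ht₁⟩ := lt_min_iff.1 ht
  refine ⟨t, ⟨ht₀, ht₁⟩, fun i j hij => ?_⟩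
  calc t ^ j ≤ t ^ (i + 1) := pow_le_pow_of_le_one ht₀.le ht₁.le hij
    _ = t * t ^ i := pow_succ' t i
    _ < ε * t ^ i := by gcongr

theorem ballantine_general {ι 𝕜 : Type*} [NontriviallyNormedField 𝕜] [CompleteSpace 𝕜] [Fintype ι]
    [LinearOrder ι] [LocallyFiniteOrderBot ι] {A : Matrix ι ι 𝕜}
    (hA : ∀ j, principalMinor A (Iic j) ≠ 0) :
    ∃ ε > (0 : ℝ), ∀ μ : ι → 𝕜, (∀ i j, i < j → ‖μ j‖ < ε * ‖μ i‖) →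
      ∃ d : ι → 𝕜, (diagonal d * A).charpoly = ∏ i, (X - C (μ i)) := by
  obtain ⟨ε, hε, hsol⟩ :=
    Metric.eventually_nhds_iff.1 (eventually_exists_det_scaledPencil_eq_zero hA)
  refine ⟨min ε 1, by positivity, fun μ hμ => ?_⟩
  have hpos {i j : ι} (hij : i < j) : 0 < ‖μ i‖ :=
    pos_of_mul_pos_right ((norm_nonneg _).trans_lt (hμ i j hij)) (by positivity)
  have hanti : StrictAnti fun i => ‖μ i‖ := fun i j hij =>
    (hμ i j hij).trans_le (mul_le_of_le_one_left (norm_nonneg _) (min_le_right _ _))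
  let r (a b : ι) : 𝕜 := if a < b then μ b / μ a else 0
  have hr_mul (a b : ι) (hab : a < b) : μ a * r a b = μ b := by
    simp only [r, if_pos hab, mul_div_cancel₀ _ (norm_pos_iff.1 (hpos hab))]
  have hr_small : dist r 0 < ε := by
    simp only [dist_zero_right, pi_norm_lt_iff hε]
    intro a b
    by_cases hab : a < b
    · simp only [r, if_pos hab, norm_div, div_lt_iff₀ (hpos hab)]
      exact (hμ a b hab).trans_le (by gcongr; exact min_le_left _ _)
    · simpa only [r, if_neg hab, norm_zero]
  obtain ⟨x, hx⟩ := hsol hr_small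
  refine ⟨fun i => μ i * x i, charpoly_eq_prod_X_sub_C hanti.injective.of_comp fun j => ?_⟩
  rw [← diagonal_mul_scaledPencil A hr_mul, det_mul, hx j, mul_zero]

/-- **Ballantine's theorem.** If all leading principal minors of a complex
`n × n` matrix `A` (`n ≥ 1`) are nonzero, then there exists a complex diagonal
matrix `D` such that all eigenvalues of `D * A` are real, positive and simple. -/
theorem ballantine {n : ℕ} (hn : 1 ≤ n) (A : Matrix (Fin n) (Fin n) ℂ)
    (hminors : ∀ k : Fin n,
      (A.submatrix (Fin.castLE k.isLt) (Fin.castLE k.isLt)).det ≠ 0) :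
    ∃ d : Fin n → ℂ,
      ∃ μ : Fin n → ℝ, Function.Injective μ ∧ (∀ i, 0 < μ i) ∧
        (Matrix.diagonal d * A).charpoly = ∏ i, (X - C ((μ i : ℂ))) := by
  obtain ⟨ε, hε, hspectrum⟩ := ballantine_general fun k =>
    (principalMinor_Iic_eq_det_submatrix_castLE A k).trans_ne (hminors k)
  obtain ⟨t, ⟨ht₀, ht₁⟩, hsep⟩ := exists_pow_lt_mul_pow hε
  obtain ⟨d, hd⟩ := hspectrum (fun i => ((t ^ i.val : ℝ) : ℂ)) fun i j hij => by
    simpa [abs_of_pos ht₀] using hsep i j hij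
  exact ⟨d, fun i => t ^ i.val, (pow_right_injective₀ ht₀ ht₁.ne).comp Fin.val_injective,
    fun i => pow_pos ht₀ _, hd⟩
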